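/- Let ν be the unique invariant σ-finite measure of the chain Y, normalized by F_ν(x₀) = 1. Then for every δ' ∈ (0, δ) one has F_ν(x) = O(e^{δ' x}) as x → −∞. -/

import Mathlib

open MeasureTheory ProbabilityTheory Real Filter Set
open scoped ENNReal

noncomputable def hkfun (k x : ℝ) : ℝ :=
  Real.log ((Real.exp (-k) + Real.exp x) / (1 + Real.exp (x - k)))

noncomputable def hY (y : ℝ) : ℝ := y + Real.log (1 + Real.exp (-y))

/-- A σ-finite measure ν is invariant for the chain Y_{n+1} = z_{n+1} + hY (Y_n),
where the increments have density ζ. -/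
def IsInvariantY (ζ : ℝ → ℝ) (ν : Measure ℝ) : Prop :=
  ∀ g : ℝ → ℝ≥0∞, Measurable g →
    ∫⁻ z, g z ∂ν = ∫⁻ y, ∫⁻ z, g (z + hY y) * ENNReal.ofReal (ζ z) ∂volume ∂ν

lemma aux_jensen (m : Measure ℝ) [IsProbabilityMeasure m] (h0 : m {0} = 0)
    (hi : Integrable (fun z : ℝ => z) m) (hm : ∫ z, z ∂m = 0) (δ : ℝ) (hδ : 0 < δ) :
    1 < ∫⁻ z, ENNReal.ofReal (Real.exp (-δ * z)) ∂m := by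
  by_contra hcon
  push Not at hcon
  have hint : Integrable (fun z : ℝ => Real.exp (-δ * z)) m := by
    refine ⟨by fun_prop, ?_⟩
    rw [hasFiniteIntegral_iff_ofReal (Eventually.of_forall fun z => (Real.exp_pos _).le)]
    exact lt_of_le_of_lt hcon ENNReal.one_lt_top
  have hle : ∫ z, Real.exp (-δ * z) ∂m ≤ 1 := by
    rw [integral_eq_lintegral_of_nonneg_ae (Eventually.of_forall fun z => (Real.exp_pos _).le)
      (by fun_prop)]
    exact ENNReal.toReal_le_of_le_ofReal zero_le_one (by simpa using hcon)
  have hD : Integrable (fun z : ℝ => Real.exp (-δ * z) - 1 + δ * z) m :=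
    (hint.sub (integrable_const 1)).add (hi.const_mul δ)
  have hDnn : ∀ z : ℝ, 0 ≤ Real.exp (-δ * z) - 1 + δ * z := fun z => by
    have := Real.add_one_le_exp (-δ * z)
    linarith
  have hDi : ∫ z, (Real.exp (-δ * z) - 1 + δ * z) ∂m ≤ 0 := by
    have hs : Integrable (fun z : ℝ => Real.exp (-δ * z) - 1) m := hint.sub (integrable_const 1)
    rw [integral_add hs (hi.const_mul δ),
      integral_sub hint (integrable_const 1), integral_const_mul, hm]
    simp
    simpa using hle
  have hz : ∫ z, (Real.exp (-δ * z) - 1 + δ * z) ∂m = 0 :=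
    le_antisymm hDi (integral_nonneg hDnn)
  rw [integral_eq_zero_iff_of_nonneg hDnn hD] at hz
  have h1 : ∀ᵐ z ∂m, z ∈ ({0} : Set ℝ) := by
    filter_upwards [hz] with z hz
    by_contra hne
    have hne' : -δ * z ≠ 0 := mul_ne_zero (by linarith) hne
    have := Real.add_one_lt_exp hne'
    have hz' : Real.exp (-δ * z) - 1 + δ * z = 0 := hz
    linarith
  have h2 : ∀ᵐ z ∂m, z ∉ ({0} : Set ℝ) := by
    rw [ae_iff]; simpa using h0
  have h3 : ∀ᵐ z ∂m, False := by
    filter_upwards [h1, h2] with z a b using b a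
  rw [ae_iff] at h3
  simp at h3

lemma aux_trunc (m : Measure ℝ) [IsProbabilityMeasure m] (δ : ℝ) (hδ : 0 < δ)
    (h : 1 < ∫⁻ z, ENNReal.ofReal (Real.exp (-δ * z)) ∂m) :
    ∃ R : ℕ, 1 < ∫ z, min (Real.exp (-δ * z)) (Real.exp (δ * R)) ∂m := by
  have ht : Tendsto (fun R : ℕ => ∫⁻ z, ENNReal.ofReal (min (Real.exp (-δ * z)) (Real.exp (δ * R))) ∂m)
      atTop (nhds (∫⁻ z, ENNReal.ofReal (Real.exp (-δ * z)) ∂m)) := by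
    apply lintegral_tendsto_of_tendsto_of_monotone
    · intro n; fun_prop
    · refine Eventually.of_forall fun z a b hab => ?_
      apply ENNReal.ofReal_le_ofReal
      apply min_le_min le_rfl
      apply Real.exp_le_exp.2
      have : (a:ℝ) ≤ b := by exact_mod_cast hab
      nlinarith
    · refine Eventually.of_forall fun z => ?_
      apply tendsto_const_nhds.congr'
      obtain ⟨n, hn⟩ := exists_nat_ge (-z)
      filter_upwards [eventually_ge_atTop n] with k hk
      rw [min_eq_left]
      apply Real.exp_le_exp.2
      have : (n:ℝ) ≤ k := by exact_mod_cast hk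
      nlinarith
  obtain ⟨R, hR⟩ := (ht.eventually (lt_mem_nhds h)).exists
  refine ⟨R, ?_⟩
  have hnn : ∀ z : ℝ, 0 ≤ min (Real.exp (-δ * z)) (Real.exp (δ * R)) := fun z => by positivity
  have hI : Integrable (fun z : ℝ => min (Real.exp (-δ * z)) (Real.exp (δ * R))) m := by
    apply Integrable.of_bound (C := Real.exp (δ * R)) (by fun_prop)
    refine Eventually.of_forall fun z => ?_
    rw [Real.norm_of_nonneg (hnn z)]
    exact min_le_right _ _
  rw [← ofReal_integral_eq_lintegral_ofReal hI (Eventually.of_forall hnn)] at hR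
  rw [← ENNReal.ofReal_one] at hR
  exact (ENNReal.ofReal_lt_ofReal_iff_of_nonneg zero_le_one).1 hR

lemma hY_ge (y : ℝ) : y ≤ hY y := by
  unfold hY
  have := Real.log_nonneg (x := 1 + Real.exp (-y)) (by linarith [Real.exp_pos (-y)])
  linarith

lemma hY_le (y : ℝ) : hY y ≤ y + Real.exp (-y) := by
  unfold hY
  have := Real.log_le_sub_one_of_pos (x := 1 + Real.exp (-y)) (by positivity)
  linarith

lemma hY_nonneg (y : ℝ) : 0 ≤ hY y := by
  have : hY y = Real.log (1 + Real.exp y) := by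
    unfold hY
    nth_rewrite 1 [← Real.log_exp y]
    rw [← Real.log_mul (by positivity) (by positivity), mul_add, ← Real.exp_add]
    simp [add_comm]
  rw [this]
  exact Real.log_nonneg (by linarith [Real.exp_pos y])

lemma hY_meas : Measurable hY := by
  unfold hY; fun_prop

/-- drift of the truncated test function -/
lemma aux_drift (m : Measure ℝ) [IsProbabilityMeasure m] (δ : ℝ) (hδ : 0 < δ)
    (R : ℕ) (hR : 1 < ∫ z, min (Real.exp (-δ * z)) (Real.exp (δ * R)) ∂m) :
    ∃ c : ℝ, 0 < c ∧ ∃ K : ℝ, ∀ N y : ℝ, K ≤ y →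
      ENNReal.ofReal (1 + c) *
        ENNReal.ofReal (min 1 (Real.exp (-δ * y)) - Real.exp (-δ * N)) ≤
      ∫⁻ z, ENNReal.ofReal (min 1 (Real.exp (-δ * (z + hY y))) - Real.exp (-δ * N)) ∂m := by
  set A := ∫ z, min (Real.exp (-δ * z)) (Real.exp (δ * R)) ∂m with hA
  have hlim : Tendsto (fun K : ℝ => A * Real.exp (-δ * Real.exp (-K))) atTop (nhds (A * Real.exp (-δ * 0))) :=
    ((Real.continuous_exp.tendsto _).comp
      ((Real.tendsto_exp_neg_atTop_nhds_zero).const_mul (-δ))).const_mul A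
  have hAc : 1 + (A-1)/2 < A * Real.exp (-δ * 0) := by simp; linarith
  obtain ⟨K, hK, hKR⟩ := ((hlim.eventually (lt_mem_nhds hAc)).and (eventually_ge_atTop (R:ℝ))).exists
  refine ⟨(A-1)/2, by linarith, K, fun N y hy => ?_⟩
  set c := (A-1)/2 with hc
  have hc0 : 0 < c := by rw [hc]; linarith
  have hnn : ∀ z : ℝ, 0 ≤ min (Real.exp (-δ * z)) (Real.exp (δ * R)) := fun z => by positivity
  have hI : Integrable (fun z : ℝ => min (Real.exp (-δ * z)) (Real.exp (δ * R))) m := by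
    apply Integrable.of_bound (C := Real.exp (δ * R)) (by fun_prop)
    refine Eventually.of_forall fun z => ?_
    rw [Real.norm_of_nonneg (hnn z)]
    exact min_le_right _ _
  set f : ℝ → ℝ := fun z => Real.exp (-δ * hY y) * min (Real.exp (-δ * z)) (Real.exp (δ * R))
    - Real.exp (-δ * N) with hf
  have hfI : Integrable f m := (hI.const_mul _).sub (integrable_const _)
  have hRy : (R:ℝ) ≤ hY y := by linarith [hY_ge y]
  have hfle : ∀ z, f z ≤ min 1 (Real.exp (-δ * (z + hY y))) - Real.exp (-δ * N) := by
    intro z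
    rw [hf]
    apply sub_le_sub_right
    apply le_min
    · calc _ ≤ Real.exp (-δ * hY y) * Real.exp (δ * R) := by gcongr; exact min_le_right _ _
        _ = Real.exp (-δ * hY y + δ * R) := by rw [Real.exp_add]
        _ ≤ 1 := by apply Real.exp_le_one_iff.2; nlinarith
    · calc _ ≤ Real.exp (-δ * hY y) * Real.exp (-δ * z) := by gcongr; exact min_le_left _ _
        _ = _ := by rw [← Real.exp_add]; ring_nf
  have hfint : ∫ z, f z ∂m = Real.exp (-δ * hY y) * A - Real.exp (-δ * N) := by
    rw [hf, integral_sub (hI.const_mul _) (integrable_const _), integral_const_mul]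
    simp [hA]
  have hstep : ENNReal.ofReal (∫ z, f z ∂m) ≤ ∫⁻ z, ENNReal.ofReal (f z) ∂m := by
    calc _ ≤ ENNReal.ofReal (∫ z, max (f z) 0 ∂m) := by
          apply ENNReal.ofReal_le_ofReal
          exact integral_mono hfI hfI.pos_part (fun z => le_max_left _ _)
      _ = ∫⁻ z, ENNReal.ofReal (max (f z) 0) ∂m :=
          ofReal_integral_eq_lintegral_ofReal hfI.pos_part
            (Eventually.of_forall fun z => le_max_right _ _)
      _ = _ := by simp
  refine le_trans ?_ (hstep.trans (lintegral_mono fun z => ENNReal.ofReal_le_ofReal (hfle z)))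
  rw [← ENNReal.ofReal_mul (by linarith), hfint]
  apply ENNReal.ofReal_le_ofReal
  have h1 : Real.exp (-δ * y) * (1 + c) ≤ Real.exp (-δ * hY y) * A := by
    have : Real.exp (-δ * y) * Real.exp (-δ * Real.exp (-K)) ≤ Real.exp (-δ * hY y) := by
      rw [← Real.exp_add]
      apply Real.exp_le_exp.2
      have h2 := hY_le y
      have h3 : Real.exp (-y) ≤ Real.exp (-K) := Real.exp_le_exp.2 (by linarith)
      nlinarith
    calc _ ≤ Real.exp (-δ * y) * (A * Real.exp (-δ * Real.exp (-K))) := by gcongr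
      _ = (Real.exp (-δ * y) * Real.exp (-δ * Real.exp (-K))) * A := by ring
      _ ≤ _ := by gcongr
  have h4 : min 1 (Real.exp (-δ * y)) ≤ Real.exp (-δ * y) := min_le_right _ _
  have h5 := Real.exp_pos (-δ * N)
  nlinarith

lemma aux_finite (m : Measure ℝ) [IsProbabilityMeasure m] (δ : ℝ) (hδ : 0 < δ)
    (hJ : 1 < ∫⁻ z, ENNReal.ofReal (Real.exp (-δ * z)) ∂m) (ν : Measure ℝ)
    (hfin : ∀ x : ℝ, ν (Set.Iic x) < ⊤)
    (hinv : ∀ g : ℝ → ℝ≥0∞, Measurable g →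
      ∫⁻ z, g z ∂ν = ∫⁻ y, ∫⁻ z, g (z + hY y) ∂m ∂ν) :
    ∫⁻ y, ENNReal.ofReal (min 1 (Real.exp (-δ * y))) ∂ν < ⊤ := by
  obtain ⟨R, hR⟩ := aux_trunc m δ hδ hJ
  obtain ⟨c, hc, K, hK⟩ := aux_drift m δ hδ R hR
  set g : ℕ → ℝ → ℝ≥0∞ := fun N y =>
    ENNReal.ofReal (min 1 (Real.exp (-δ * y)) - Real.exp (-δ * N)) with hg
  have hgm : ∀ N, Measurable (g N) := fun N => by rw [hg]; fun_prop
  have hg1 : ∀ N y, g N y ≤ 1 := fun N y => by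
    rw [hg, ← ENNReal.ofReal_one]
    apply ENNReal.ofReal_le_ofReal
    have := min_le_left 1 (Real.exp (-δ * y))
    linarith [Real.exp_pos (-δ * N)]
  have hg0 : ∀ (N : ℕ) y, y ∉ Iic (N:ℝ) → g N y = 0 := fun N y hy => by
    rw [hg]
    apply ENNReal.ofReal_of_nonpos
    have h1 := min_le_right 1 (Real.exp (-δ * y))
    have h2 : Real.exp (-δ * y) ≤ Real.exp (-δ * N) := by
      apply Real.exp_le_exp.2
      simp at hy
      nlinarith
    linarith
  have hset : ∀ (N : ℕ) (x : ℝ), ∫⁻ y in Iic x, g N y ∂ν ≤ ν (Iic x) := fun N x => by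
    calc _ ≤ ∫⁻ y in Iic x, 1 ∂ν := lintegral_mono fun y => hg1 N y
      _ = _ := by simp
  have hb : ∀ N, ENNReal.ofReal c * ∫⁻ y in Ioi K, g N y ∂ν ≤ ν (Iic K) := by
    intro N
    have hsplit := lintegral_add_compl (μ := ν) (g N) (measurableSet_Iic (a := K))
    rw [compl_Iic] at hsplit
    have hfinN : ∫⁻ y, g N y ∂ν < ⊤ := by
      rw [← setLIntegral_eq_of_support_subset (s := Iic (N:ℝ))]
      · exact (hset N N).trans_lt (hfin N)
      · intro y hy
        by_contra hcon
        exact hy (hg0 N y hcon)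
    have hbfin : ∫⁻ y in Ioi K, g N y ∂ν ≠ ⊤ :=
      ((setLIntegral_le_lintegral _ _).trans_lt hfinN).ne
    have h1 : ENNReal.ofReal (1 + c) * ∫⁻ y in Ioi K, g N y ∂ν ≤ ∫⁻ y, g N y ∂ν := by
      rw [hinv (g N) (hgm N), ← lintegral_const_mul _ (hgm N)]
      refine le_trans ?_ (setLIntegral_le_lintegral (Ioi K) _)
      refine setLIntegral_mono' measurableSet_Ioi fun y hy => hK N y (le_of_lt hy)
    rw [← hsplit, ENNReal.ofReal_add zero_le_one hc.le, ENNReal.ofReal_one, add_mul, one_mul,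
      add_comm] at h1
    exact ((ENNReal.add_le_add_iff_right hbfin).1 h1).trans (hset N K)
  have hc' : ENNReal.ofReal c ≠ 0 := by simpa using hc
  have hub : ∀ N, ∫⁻ y, g N y ∂ν ≤ ν (Iic K) + ν (Iic K) / ENNReal.ofReal c := by
    intro N
    rw [← lintegral_add_compl (μ := ν) (g N) (measurableSet_Iic (a := K)), compl_Iic]
    gcongr
    · exact hset N K
    · rw [ENNReal.le_div_iff_mul_le (Or.inl hc') (Or.inl ENNReal.ofReal_ne_top), mul_comm]
      exact hb N
  have ht : Tendsto (fun N => ∫⁻ y, g N y ∂ν) atTop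
      (nhds (∫⁻ y, ENNReal.ofReal (min 1 (Real.exp (-δ * y))) ∂ν)) := by
    apply lintegral_tendsto_of_tendsto_of_monotone
    · intro n; exact (hgm n).aemeasurable
    · refine Eventually.of_forall fun y a b hab => ?_
      apply ENNReal.ofReal_le_ofReal
      apply sub_le_sub_left
      apply Real.exp_le_exp.2
      have : (a:ℝ) ≤ b := by exact_mod_cast hab
      nlinarith
    · refine Eventually.of_forall fun y => ?_
      apply ENNReal.tendsto_ofReal
      have h0 : Tendsto (fun N : ℕ => Real.exp (-δ * N)) atTop (nhds 0) := by
        apply Real.tendsto_exp_atBot.comp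
        exact tendsto_natCast_atTop_atTop.const_mul_atTop_of_neg (by linarith)
      simpa using h0.const_sub (min 1 (Real.exp (-δ * y)))
  refine (le_of_tendsto' ht hub).trans_lt ?_
  exact ENNReal.add_lt_top.2 ⟨hfin K, ENNReal.div_lt_top (hfin K).ne hc'⟩

lemma aux_int (m : Measure ℝ) (δ C : ℝ) (hδ : 0 < δ)
    (ht : ∀ x : ℝ, 0 ≤ x → m {y | x < |y|} ≤ ENNReal.ofReal (C * Real.exp (-δ * x))) :
    Integrable (fun z : ℝ => z) m := by
  refine ⟨by fun_prop, ?_⟩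
  rw [hasFiniteIntegral_iff_norm]
  rw [lintegral_eq_lintegral_meas_lt m (Eventually.of_forall fun z => norm_nonneg z) (by fun_prop)]
  have h2 : IntegrableOn (fun t : ℝ => C * Real.exp (-δ * t)) (Ioi 0) :=
    (exp_neg_integrableOn_Ioi 0 hδ).const_mul C
  refine lt_of_le_of_lt (setLIntegral_mono' measurableSet_Ioi fun t htt => ht t (le_of_lt htt)) ?_
  exact h2.lintegral_lt_top

/-- Proposition: exponential decay at -∞ of the cumulative function of the invariant
measure of the chain Y. -/
theorem stmt8
    (ζ : ℝ → ℝ) (hζmeas : Measurable ζ) (hζnn : ∀ x, 0 ≤ ζ x)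
    (hζprob : ∫ x, ζ x = 1)
    (hmean : ∫ x, x * ζ x = 0)
    (δ : ℝ) (hδ : 0 < δ) (Cδ : ℝ)
    (htail : ∀ x : ℝ, 0 ≤ x → ∫ y in {y : ℝ | x < |y|}, ζ y ≤ Cδ * Real.exp (-δ * x))
    (θ : ℝ) (hθ0 : 0 < θ) (hθ1 : θ ≤ 1) (Cθ : ℝ)
    (hHolder : ∀ x y : ℝ, |ζ x - ζ y| ≤ Cθ * |x - y| ^ θ)
    (ν : Measure ℝ) (hν0 : ν ≠ 0) [SigmaFinite ν]
    (hinv : IsInvariantY ζ ν) (hfin : ∀ x : ℝ, ν (Set.Iic x) < ⊤) (hinfty : ν Set.univ = ⊤)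
    (x₀ : ℝ)
    (hx₀supp : ∃ ε > 0, ∀ u v : ℝ, x₀ - ε ≤ u → u < v → v ≤ x₀ + ε → 0 < ν (Set.Ioo u v))
    (hnorm : (ν (Set.Iic x₀)).toReal = 1)
 :
    ∀ δ' : ℝ, 0 < δ' → δ' < δ →
      ∃ C > 0, ∃ x₁ : ℝ, ∀ x ≤ x₁, (ν (Set.Iic x)).toReal ≤ C * Real.exp (δ' * x) := by
  intro δ' hδ'0 hδ'
  have hζI : Integrable ζ := by
    by_contra h
    rw [integral_undef h] at hζprob
    norm_num at hζprob
  set m : Measure ℝ := volume.withDensity (fun z => ENNReal.ofReal (ζ z)) with hm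
  have hdm : Measurable fun z => ENNReal.ofReal (ζ z) := by fun_prop
  haveI : IsProbabilityMeasure m := ⟨by
    rw [hm, withDensity_apply _ MeasurableSet.univ, Measure.restrict_univ,
      ← ofReal_integral_eq_lintegral_ofReal hζI (Eventually.of_forall hζnn), hζprob]
    simp⟩
  have hlint : ∀ g : ℝ → ℝ≥0∞, Measurable g →
      ∫⁻ z, g z ∂m = ∫⁻ z, g z * ENNReal.ofReal (ζ z) := by
    intro g hg
    rw [hm, lintegral_withDensity_eq_lintegral_mul _ hdm hg]
    simp [mul_comm]
  have htm : ∀ x : ℝ, 0 ≤ x → m {y | x < |y|} ≤ ENNReal.ofReal (Cδ * Real.exp (-δ * x)) := by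
    intro x hx
    have hs : MeasurableSet {y : ℝ | x < |y|} := measurableSet_lt (by fun_prop) (by fun_prop)
    rw [hm, withDensity_apply _ hs,
      ← ofReal_integral_eq_lintegral_ofReal hζI.integrableOn (Eventually.of_forall hζnn)]
    exact ENNReal.ofReal_le_ofReal (htail x hx)
  have hmi := aux_int m δ Cδ hδ htm
  have hm0 : ∫ z, z ∂m = 0 := by
    rw [hm, integral_withDensity_eq_integral_toReal_smul hdm
      (Eventually.of_forall fun z => ENNReal.ofReal_lt_top), ← hmean]
    refine integral_congr_ae (Eventually.of_forall fun z => ?_)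
    simp [ENNReal.toReal_ofReal (hζnn z), mul_comm]
  have h00 : m {0} = 0 := (withDensity_absolutelyContinuous _ _) (by simp)
  have hinv' : ∀ g : ℝ → ℝ≥0∞, Measurable g →
      ∫⁻ z, g z ∂ν = ∫⁻ y, ∫⁻ z, g (z + hY y) ∂m ∂ν := by
    intro g hg
    rw [hinv g hg]
    refine lintegral_congr fun y => ?_
    rw [hlint (fun z => g (z + hY y)) (by fun_prop)]
  have hF := aux_finite m δ hδ (aux_jensen m h00 hmi hm0 δ hδ) ν hfin hinv'
  set I := ∫⁻ y, ENNReal.ofReal (min 1 (Real.exp (-δ * y))) ∂ν with hI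
  have hCnn : 0 ≤ Cδ := by
    have h1 := htail 0 le_rfl
    have h2 : 0 ≤ ∫ y in {y : ℝ | 0 < |y|}, ζ y := integral_nonneg hζnn
    simp only [mul_zero, Real.exp_zero, mul_one] at h1
    linarith
  have key : ∀ x ≤ (-1 : ℝ), ν (Iic x) ≤ ENNReal.ofReal (Cδ * Real.exp (δ * (x + 1))) * I := by
    intro x hx
    rw [← lintegral_indicator_one measurableSet_Iic,
      hinv' _ (measurable_one.indicator measurableSet_Iic), hI,
      ← lintegral_const_mul _ (by fun_prop)]
    refine lintegral_mono fun y => ?_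
    have hy0 := hY_nonneg y
    have hy1 := hY_ge y
    calc ∫⁻ z, (Iic x).indicator 1 (z + hY y) ∂m
        ≤ ∫⁻ z, ({z : ℝ | hY y - x - 1 < |z|}).indicator 1 z ∂m := by
          refine lintegral_mono fun z => ?_
          by_cases hz : z + hY y ∈ Iic x
          · have : z ∈ {z : ℝ | hY y - x - 1 < |z|} := by
              simp at hz ⊢
              have := neg_le_abs z
              linarith
            rw [indicator_of_mem hz, indicator_of_mem this]
            simp
          · rw [indicator_of_notMem hz]; simp
      _ = m {z : ℝ | hY y - x - 1 < |z|} :=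
          lintegral_indicator_one (measurableSet_lt (by fun_prop) (by fun_prop))
      _ ≤ ENNReal.ofReal (Cδ * Real.exp (-δ * (hY y - x - 1))) := htm _ (by linarith)
      _ ≤ ENNReal.ofReal (Cδ * Real.exp (δ * (x + 1)) * min 1 (Real.exp (-δ * y))) := by
          apply ENNReal.ofReal_le_ofReal
          have h1 : Real.exp (-δ * (hY y - x - 1))
              = Real.exp (δ * (x + 1)) * Real.exp (-δ * hY y) := by
            rw [← Real.exp_add]; ring_nf
          rw [h1, mul_assoc]
          gcongr
          apply le_min
          · apply Real.exp_le_one_iff.2; nlinarith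
          · apply Real.exp_le_exp.2; nlinarith
      _ = _ := ENNReal.ofReal_mul (by positivity)
  refine ⟨Cδ * Real.exp δ * I.toReal + 1, by positivity, -1, fun x hx => ?_⟩
  have h1 := ENNReal.toReal_mono (ENNReal.mul_ne_top ENNReal.ofReal_ne_top hF.ne) (key x hx)
  rw [ENNReal.toReal_mul, ENNReal.toReal_ofReal (by positivity)] at h1
  have h2 : Real.exp (δ * (x + 1)) ≤ Real.exp δ * Real.exp (δ' * x) := by
    rw [← Real.exp_add]
    apply Real.exp_le_exp.2
    nlinarith
  calc _ ≤ _ := h1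
    _ ≤ Cδ * (Real.exp δ * Real.exp (δ' * x)) * I.toReal := by gcongr
    _ ≤ _ := by nlinarith [Real.exp_pos (δ' * x)]
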